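/- arXiv:1710.10950 — 2 statements merged into one kernel-verified Lean document; each statement's English description precedes it below -/
import Mathlib

section
/- Let g be a finite-dimensional real Lie algebra with an abelian complex structure J, and let a ≥ 0. Suppose ω̄ : g_ℂ → ℂ is a ℂ-linear functional that vanishes on g^{1,0} and on g_J^{a+1,(0,1)}. Then for every V ∈ g_J^{a,(1,0)} and every Ȳ ∈ g^{0,1}, one has ω̄([V, Ȳ]) = 0. (This is the contraction statement that the Schouten bracket [V, ω̄] = ι_V dω̄ vanishes whenever ω̄ is an invariant (0,1)-form annihilating g_J^{a+1,(0,1)}.) -/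
open scoped TensorProduct

noncomputable section

/-- The `c`-eigenspace of the ℂ-linear extension of `J` on the complexification `ℂ ⊗[ℝ] g`. -/
def eig (g : Type) [LieRing g] [LieAlgebra ℝ g] (J : g →ₗ[ℝ] g) (c : ℂ) :
    Submodule ℂ (ℂ ⊗[ℝ] g) where
  carrier := {x | J.baseChange ℂ x = c • x}
  add_mem' := by
    intro a b ha hb
    simp only [Set.mem_setOf_eq, map_add] at *
    rw [ha, hb, smul_add]
  zero_mem' := by simp
  smul_mem' := by
    intro t x hx
    simp only [Set.mem_setOf_eq, map_smul] at *
    rw [hx, smul_comm]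

/-- The lower central series: `lcs g 0 = g`, `lcs g (m+1) = [lcs g m, g]`. -/
def lcs (g : Type) [LieRing g] [LieAlgebra ℝ g] : ℕ → Submodule ℝ g
  | 0 => ⊤
  | m + 1 => Submodule.span ℝ {x : g | ∃ a ∈ lcs g m, ∃ b : g, ⁅a, b⁆ = x}

/-- `g_J^m = g^m + J(g^m)`. -/
def gJ (g : Type) [LieRing g] [LieAlgebra ℝ g] (J : g →ₗ[ℝ] g) (m : ℕ) : Submodule ℝ g :=
  lcs g m ⊔ Submodule.map J (lcs g m)

/-- Complexification of a real subspace of `g`, inside `ℂ ⊗[ℝ] g`. -/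
def cxS (g : Type) [LieRing g] [LieAlgebra ℝ g] (p : Submodule ℝ g) :
    Submodule ℂ (ℂ ⊗[ℝ] g) := p.baseChange ℂ

/-- `g_J^{m,(1,0)}`. -/
def gJ10 (g : Type) [LieRing g] [LieAlgebra ℝ g] (J : g →ₗ[ℝ] g) (m : ℕ) :
    Submodule ℂ (ℂ ⊗[ℝ] g) := cxS g (gJ g J m) ⊓ eig g J Complex.I

/-- `g_J^{m,(0,1)}`. -/
def gJ01 (g : Type) [LieRing g] [LieAlgebra ℝ g] (J : g →ₗ[ℝ] g) (m : ℕ) :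
    Submodule ℂ (ℂ ⊗[ℝ] g) := cxS g (gJ g J m) ⊓ eig g J (-Complex.I)

/-- The center of `g`, as a submodule. -/
def centerS (g : Type) [LieRing g] [LieAlgebra ℝ g] : Submodule ℝ g where
  carrier := {A | ∀ B : g, ⁅A, B⁆ = 0}
  add_mem' := by
    intro a b ha hb B
    rw [add_lie, ha B, hb B, add_zero]
  zero_mem' := fun B => zero_lie B
  smul_mem' := by
    intro c a ha B
    rw [smul_lie, ha B, smul_zero]

/-- Complex conjugation on the complexification `ℂ ⊗[ℝ] g` (an ℝ-linear map). -/
def conjC (g : Type) [AddCommGroup g] [Module ℝ g] :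
    ℂ ⊗[ℝ] g →ₗ[ℝ] ℂ ⊗[ℝ] g :=
  LinearMap.rTensor g Complex.conjAe.toLinearMap

/-!
Abelianness amounts to `[JA, B] = -[A, JB]`, so in `[g^a + J(g^a), g]` the `J` can be moved to the
second argument, and the bracket already lies in `g^{a+1}`. Since `g_J^{a+1}` is `J`-stable, its
complexification is the sum of its `(1,0)` and `(0,1)` parts, and `ω̄` kills both of them.
-/

section Eigenspaces

open Module.End

theorem sup_map_mem_invtSubmodule {R M : Type*} [Semiring R] [AddCommMonoid M] [Module R M]
    {f : Module.End R M} {p : Submodule R M} (hp : p ∈ (f * f).invtSubmodule) :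
    p ⊔ p.map f ∈ f.invtSubmodule := by
  rw [mem_invtSubmodule_iff_map_le, Submodule.map_sup, ← Submodule.map_comp]
  exact sup_le le_sup_right (le_sup_of_le_left ((mem_invtSubmodule_iff_map_le _).mp hp))

theorem inf_eigenspace_sup_inf_eigenspace_eq {R M : Type*} [CommRing R] [AddCommGroup M]
    [Module R M] {f : Module.End R M} {μ ν : R} (hμν : IsUnit (μ - ν))
    (hf : (f - algebraMap R (Module.End R M) μ) * (f - algebraMap R (Module.End R M) ν) = 0)
    {p : Submodule R M} (hp : p ∈ f.invtSubmodule) :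
    p ⊓ f.eigenspace μ ⊔ p ⊓ f.eigenspace ν = p := by
  refine le_antisymm (sup_le inf_le_left inf_le_left) fun x hx ↦ ?_
  have hfx : f x ∈ p := hp hx
  have hffx : f (f x) - ν • f x - μ • (f x - ν • x) = 0 := by
    simpa [Module.algebraMap_end_apply] using LinearMap.congr_fun hf x
  have hμ : f x - ν • x ∈ f.eigenspace μ := by
    rw [mem_eigenspace_iff, map_sub, map_smul]
    exact sub_eq_zero.mp hffx
  have hν : μ • x - f x ∈ f.eigenspace ν := by
    rw [mem_eigenspace_iff, map_sub, map_smul, ← sub_eq_zero, ← neg_eq_zero, ← hffx]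
    module
  have hsplit : (μ - ν) • x = (f x - ν • x) + (μ • x - f x) := by module
  rw [← Submodule.smul_mem_iff_of_isUnit _ hμν, hsplit]
  exact Submodule.add_mem_sup ⟨p.sub_mem hfx (p.smul_mem ν hx), hμ⟩
    ⟨p.sub_mem (p.smul_mem μ hx) hfx, hν⟩

end Eigenspaces

theorem baseChange_mem_invtSubmodule {R A M : Type*} [CommSemiring R] [Semiring A] [Algebra R A]
    [AddCommMonoid M] [Module R M] {f : Module.End R M} {p : Submodule R M}
    (hp : p ∈ f.invtSubmodule) :
    p.baseChange A ∈ Module.End.invtSubmodule (f.baseChange A) := by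
  rintro _ ⟨t, rfl⟩
  induction t with
  | zero => simp
  | tmul c x => exact Submodule.tmul_mem_baseChange_of_mem c (hp x.2)
  | add t u ht hu => rw [map_add]; exact add_mem ht hu

theorem lie_mem_baseChange {R A L M : Type*} [CommRing R] [CommRing A] [Algebra R A] [LieRing L]
    [LieAlgebra R L] [AddCommGroup M] [Module R M] [LieRingModule L M] [LieModule R L M]
    {p : Submodule R L} {q r : Submodule R M}
    (h : ∀ x ∈ p, ∀ m ∈ q, ⁅x, m⁆ ∈ r) {X : A ⊗[R] L} (hX : X ∈ p.baseChange A)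
    {Y : A ⊗[R] M} (hY : Y ∈ q.baseChange A) : ⁅X, Y⁆ ∈ r.baseChange A := by
  let bracket : A ⊗[R] L →ₗ[A] A ⊗[R] M →ₗ[A] A ⊗[R] M :=
    LinearMap.mk₂ A (fun X Y ↦ ⁅X, Y⁆) (fun X X' Y ↦ add_lie X X' Y) (fun c X Y ↦ smul_lie c X Y)
      (fun X Y Y' ↦ lie_add X Y Y') (fun c X Y ↦ lie_smul c X Y)
  have hle : Submodule.map₂ bracket (p.baseChange A) (q.baseChange A) ≤ r.baseChange A := by
    rw [Submodule.baseChange_eq_span, Submodule.baseChange_eq_span,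
      Submodule.map₂_span_span, Submodule.span_le]
    rintro _ ⟨_, ⟨x, hx, rfl⟩, _, ⟨m, hm, rfl⟩, rfl⟩
    exact Submodule.tmul_mem_baseChange_of_mem (1 * 1 : A) (h x hx m hm)
  exact Submodule.map₂_le.mp hle X hX Y hY

section ComplexStructure

theorem baseChange_sub_I_mul_baseChange_add_I {V : Type*} [AddCommGroup V] [Module ℝ V]
    {J : Module.End ℝ V} (hJ2 : ∀ v : V, J (J v) = -v) :
    (J.baseChange ℂ - algebraMap ℂ (Module.End ℂ (ℂ ⊗[ℝ] V)) Complex.I) *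
      (J.baseChange ℂ - algebraMap ℂ (Module.End ℂ (ℂ ⊗[ℝ] V)) (-Complex.I)) = 0 := by
  have hJJ : J * J = -(1 : Module.End ℝ V) := LinearMap.ext hJ2
  have hsq : J.baseChange ℂ * J.baseChange ℂ = -(1 : Module.End ℂ (ℂ ⊗[ℝ] V)) := by
    rw [← LinearMap.baseChange_mul, hJJ, LinearMap.baseChange_neg, LinearMap.baseChange_one]
  rw [map_neg, sub_neg_eq_add,
    ← (Algebra.commute_algebraMap_right Complex.I (J.baseChange ℂ)).mul_self_sub_mul_self_eq',
    hsq, ← map_mul, Complex.I_mul_I, map_neg, map_one, sub_self]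

variable {g : Type} [LieRing g] [LieAlgebra ℝ g] {J : g →ₗ[ℝ] g}

theorem eig_eq_eigenspace (c : ℂ) : eig g J c = Module.End.eigenspace (J.baseChange ℂ) c :=
  Submodule.ext fun _ ↦ Module.End.mem_eigenspace_iff.symm

theorem gJ_mem_invtSubmodule (hJ2 : ∀ v : g, J (J v) = -v) (m : ℕ) :
    gJ g J m ∈ Module.End.invtSubmodule J :=
  sup_map_mem_invtSubmodule fun v hv ↦ by simpa [hJ2] using hv

theorem gJ10_sup_gJ01 (hJ2 : ∀ v : g, J (J v) = -v) (m : ℕ) :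
    gJ10 g J m ⊔ gJ01 g J m = cxS g (gJ g J m) := by
  have hI : IsUnit (Complex.I - -Complex.I) := by simp [← two_mul]
  simp only [gJ10, gJ01, eig_eq_eigenspace]
  exact inf_eigenspace_sup_inf_eigenspace_eq hI (baseChange_sub_I_mul_baseChange_add_I hJ2)
    (baseChange_mem_invtSubmodule (gJ_mem_invtSubmodule hJ2 m))

theorem map_lie_eq_neg_lie_map (hJ2 : ∀ v : g, J (J v) = -v)
    (hab : ∀ A B : g, ⁅J A, J B⁆ = ⁅A, B⁆) (x y : g) : ⁅J x, y⁆ = -⁅x, J y⁆ := by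
  rw [← hab (J x) y, hJ2, neg_lie]

theorem lie_mem_lcs_succ {m : ℕ} {x : g} (hx : x ∈ lcs g m) (y : g) : ⁅x, y⁆ ∈ lcs g (m + 1) :=
  Submodule.subset_span ⟨x, hx, y, rfl⟩

theorem lie_mem_lcs_succ_of_mem_gJ (hJ2 : ∀ v : g, J (J v) = -v)
    (hab : ∀ A B : g, ⁅J A, J B⁆ = ⁅A, B⁆) {m : ℕ} {x : g} (hx : x ∈ gJ g J m) (y : g) :
    ⁅x, y⁆ ∈ lcs g (m + 1) := by
  obtain ⟨u, hu, _, ⟨v, hv, rfl⟩, rfl⟩ := Submodule.mem_sup.mp hx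
  rw [add_lie, map_lie_eq_neg_lie_map hJ2 hab]
  exact add_mem (lie_mem_lcs_succ hu y) (neg_mem (lie_mem_lcs_succ hv (J y)))

theorem lie_mem_cxS_lcs_succ (hJ2 : ∀ v : g, J (J v) = -v)
    (hab : ∀ A B : g, ⁅J A, J B⁆ = ⁅A, B⁆) {m : ℕ} {V : ℂ ⊗[ℝ] g} (hV : V ∈ cxS g (gJ g J m))
    (Y : ℂ ⊗[ℝ] g) : ⁅V, Y⁆ ∈ cxS g (lcs g (m + 1)) := by
  have hY : Y ∈ (⊤ : Submodule ℝ g).baseChange ℂ := by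
    rw [Submodule.baseChange_top]
    exact Submodule.mem_top
  exact lie_mem_baseChange (fun x hx y _ ↦ lie_mem_lcs_succ_of_mem_gJ hJ2 hab hx y) hV hY

theorem statement5_general (hJ2 : ∀ v : g, J (J v) = -v)
    (hab : ∀ A B : g, ⁅J A, J B⁆ = ⁅A, B⁆) (a : ℕ) {E : Type*} [AddCommGroup E] [Module ℂ E]
    (ω : (ℂ ⊗[ℝ] g) →ₗ[ℂ] E) (hω10 : ∀ x ∈ gJ10 g J (a + 1), ω x = 0)
    (hω01 : ∀ x ∈ gJ01 g J (a + 1), ω x = 0) :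
    ∀ V ∈ cxS g (gJ g J a), ∀ Y : ℂ ⊗[ℝ] g, ω ⁅V, Y⁆ = 0 := by
  intro V hV Y
  have hker : cxS g (gJ g J (a + 1)) ≤ LinearMap.ker ω :=
    gJ10_sup_gJ01 hJ2 (a + 1) ▸ sup_le hω10 hω01
  exact hker (Submodule.baseChange_mono ℂ le_sup_left (lie_mem_cxS_lcs_succ hJ2 hab hV Y))

end ComplexStructure

/-- If the ℂ-linear functional `ω̄` on `g_ℂ` vanishes on `g^{1,0}` and on
`g_J^{a+1,(0,1)}`, then `ω̄([V, Ȳ]) = 0` for every `V ∈ g_J^{a,(1,0)}` and `Ȳ ∈ g^{0,1}`. -/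
theorem statement5 (g : Type) [LieRing g] [LieAlgebra ℝ g] [FiniteDimensional ℝ g]
    (J : g →ₗ[ℝ] g) (hJ2 : ∀ v : g, J (J v) = -v)
    (hab : ∀ A B : g, ⁅J A, J B⁆ = ⁅A, B⁆) (a : ℕ)
    (ω : (ℂ ⊗[ℝ] g) →ₗ[ℂ] ℂ)
    (hω10 : ∀ x ∈ eig g J Complex.I, ω x = 0)
    (hω01 : ∀ x ∈ gJ01 g J (a + 1), ω x = 0) :
    ∀ V ∈ gJ10 g J a, ∀ Y ∈ eig g J (-Complex.I), ω ⁅V, Y⁆ = 0 :=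
  fun V hV Y _ ↦ statement5_general hJ2 hab a ω (fun x hx ↦ hω10 x hx.2) hω01 V hV.1 Y
end
end

section
/- Let P_{4n+2} be the real Lie algebra with basis {X_{4k+1}, X_{4k+2}, X_{4k+3}, X_{4k+4}, Z_1, Z_2 : 0 ≤ k ≤ n−1} and only non-zero brackets [X_{4k+1}, X_{4k+2}] = −(1/2)Z_1, [X_{4k+1}, X_{4k+4}] = −(1/2)Z_2, [X_{4k+2}, X_{4k+3}] = −(1/2)Z_2. Define J by JX_{4k+1} = X_{4k+2}, JX_{4k+3} = −X_{4k+4}, JZ_1 = −Z_2. Then: (i) J is an abelian complex structure on P_{4n+2}; (ii) setting V = (Z_1 + iZ_2)/2, T_{2k+1} = (X_{4k+1} − iX_{4k+2})/2, T_{2k+2} = (X_{4k+3} + iX_{4k+4})/2, the non-zero complex structure equations are [T̄_{2k+1}, T_{2k+1}] = (i/4)(V + V̄) and [T̄_{2k+1}, T_{2k+2}] = −(1/4)(V − V̄); and (iii) with ρ the ℂ-linear functional on the complexification with ρ(V) = 1 and ρ = 0 on V̄ and all T_j, T̄_j, the map t^{1,0} → (t^{0,1})^*, X ↦ (Ȳ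 ↦ ρ([X, Ȳ])), where t^{1,0} = span_ℂ{T_1, …, T_{2n}} and t^{0,1} = span_ℂ{T̄_1, …, T̄_{2n}}, is bijective (dρ is non-degenerate). -/
open scoped TensorProduct

noncomputable section

/-- `(x - i y)/2` as an element of the complexification `ℂ ⊗[ℝ] h`. -/
def holo (h : Type) [AddCommGroup h] [Module ℝ h] (x y : h) : ℂ ⊗[ℝ] h :=
  ((1 : ℂ)/2) ⊗ₜ[ℝ] x - (Complex.I/2) ⊗ₜ[ℝ] y

/-- `(x + i y)/2` as an element of the complexification `ℂ ⊗[ℝ] h`. -/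
def antiholo (h : Type) [AddCommGroup h] [Module ℝ h] (x y : h) : ℂ ⊗[ℝ] h :=
  ((1 : ℂ)/2) ⊗ₜ[ℝ] x + (Complex.I/2) ⊗ₜ[ℝ] y

/-- The pairing `X ↦ (Y ↦ f ⁅X, Y⁆)` between two subspaces of a complex Lie algebra,
where `f` is a ℂ-linear functional. -/
def bracketPairing (L : Type) [LieRing L] [LieAlgebra ℂ L]
    (f : L →ₗ[ℂ] ℂ) (p q : Submodule ℂ L) : p →ₗ[ℂ] Module.Dual ℂ q where
  toFun X :=
    { toFun := fun Y => f ⁅(X : L), (Y : L)⁆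
      map_add' := fun Y₁ Y₂ => by simp [lie_add]
      map_smul' := fun c Y => by simp [lie_smul] }
  map_add' X₁ X₂ := by
    ext Y
    simp [add_lie]
  map_smul' c X := by
    ext Y
    simp [smul_lie]

/-!
By bilinearity, and since `J² = -1`, being abelian only has to be tested on one vector of each plane
`⟨x, J x⟩` of the frame; there it amounts to `[X₂, X₄] = -[X₁, X₃]` and `[X₂, X₃] = [X₁, X₄]` in
each block.

For the pairing, the brackets between different blocks vanish and `[T₂, T̄₂] = 0`. Hence, listing
`t^{1,0}` as `T₁, T₂` and `t^{0,1}` as `T̄₂, T̄₁`, the Gram matrix of `ρ[·, ·]` is block upper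
triangular, and both diagonal blocks are the scalar matrix `(ρ(V) - ρ(V̄))/4`.
-/

section AbelianPair

variable {g : Type*} [LieRing g]

/-- The condition for `J` to be an abelian complex structure, tested on the planes `⟨x, J x⟩` and
`⟨y, J y⟩`; it is symmetric in `x` and `y`, and suffices for the whole planes when `J² = -1`. -/
def IsAbelianPair (J : g → g) (x y : g) : Prop :=
  ⁅J x, J y⁆ = ⁅x, y⁆ ∧ ⁅J x, y⁆ = -⁅x, J y⁆

theorem IsAbelianPair.refl (J : g → g) (x : g) : IsAbelianPair J x x :=
  ⟨by rw [lie_self, lie_self], (lie_skew _ _).symm⟩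

theorem IsAbelianPair.symm {J : g → g} {x y : g} (h : IsAbelianPair J x y) :
    IsAbelianPair J y x :=
  ⟨by rw [← lie_skew, h.1, lie_skew], by rw [← lie_skew, ← h.2, lie_skew]⟩

variable {R : Type*} [CommRing R]

theorem map_map_eq_neg_of_span_eq_top {M : Type*} [AddCommGroup M] [Module R M] {J : M →ₗ[R] M}
    {S : Set M} (hS : Submodule.span R (S ∪ J '' S) = ⊤) (hJ : ∀ x ∈ S, J (J x) = -x) (v : M) :
    J (J v) = -v := by
  suffices J ∘ₗ J = -LinearMap.id from LinearMap.congr_fun this v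
  refine LinearMap.ext_on hS ?_
  rintro _ (hx | ⟨x, hx, rfl⟩)
  · exact hJ _ hx
  · simp [hJ x hx]

theorem lie_map_map_of_span_eq_top [LieAlgebra R g] {J : g →ₗ[R] g} {S : Set g}
    (hS : Submodule.span R (S ∪ J '' S) = ⊤) (hJ : ∀ x ∈ S, J (J x) = -x)
    (hlie : ∀ x ∈ S, ∀ y ∈ S, IsAbelianPair J x y) (a c : g) :
    ⁅J a, J c⁆ = ⁅a, c⁆ := by
  have hmem (v : g) : v ∈ Submodule.span R (S ∪ J '' S) := hS ▸ Submodule.mem_top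
  induction hmem a, hmem c using Submodule.span_induction₂ with
  | mem_mem x y hx hy =>
    rcases hx with hx | ⟨x, hx, rfl⟩ <;> rcases hy with hy | ⟨y, hy, rfl⟩
    · exact (hlie x hx y hy).1
    · rw [hJ y hy, lie_neg, (hlie x hx y hy).2, neg_neg]
    · rw [hJ x hx, neg_lie, (hlie x hx y hy).2]
    · rw [hJ x hx, hJ y hy, neg_lie, lie_neg, neg_neg, (hlie x hx y hy).1]
  | zero_left y _ => simp
  | zero_right x _ => simp
  | add_left x y z _ _ _ hx hy => rw [map_add, add_lie, add_lie, hx, hy]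
  | add_right x y z _ _ _ hy hz => rw [map_add, lie_add, lie_add, hy, hz]
  | smul_left r x y _ _ h => rw [map_smul, smul_lie, smul_lie, h]
  | smul_right r x y _ _ h => rw [map_smul, lie_smul, lie_smul, h]

end AbelianPair

section GramMatrix

open scoped Matrix

theorem span_range_mk_eq_top {R M ι : Type*} [Semiring R] [AddCommMonoid M] [Module R M]
    (u : ι → M) :
    Submodule.span R (Set.range fun i =>
      (⟨u i, Submodule.subset_span ⟨i, rfl⟩⟩ : Submodule.span R (Set.range u))) = ⊤ := by
  rw [← Submodule.span_span_coe_preimage (R := R) (s := Set.range u)]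
  congr 1
  ext x
  simp [Subtype.ext_iff]

variable {ι : Type*} [Fintype ι] [DecidableEq ι]

theorem bijective_of_isUnit_gram {R M N : Type*} [CommRing R] [AddCommGroup M] [Module R M]
    [AddCommGroup N] [Module R N] (B : M →ₗ[R] Module.Dual R N) {u : ι → M} {s : ι → N}
    (hu : Submodule.span R (Set.range u) = ⊤) (hs : Submodule.span R (Set.range s) = ⊤)
    (hG : IsUnit (Matrix.of fun i j => B (u i) (s j))) :
    Function.Bijective B := by
  set G := Matrix.of fun i j => B (u i) (s j) with G_def
  have apply_sum (c : ι → R) (j : ι) : B (∑ i, c i • u i) (s j) = (c ᵥ* G) j := by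
    simp [G_def, Matrix.vecMul, dotProduct]
  constructor
  · rw [injective_iff_map_eq_zero]
    intro x hx
    have hx_mem : x ∈ Submodule.span R (Set.range u) := hu ▸ Submodule.mem_top
    obtain ⟨c, rfl⟩ := (Submodule.mem_span_range_iff_exists_fun R).1 hx_mem
    have vecMul_eq : c ᵥ* G = 0 ᵥ* G := by
      ext j
      rw [← apply_sum, hx, Matrix.zero_vecMul, LinearMap.zero_apply, Pi.zero_apply]
    simp [Matrix.vecMul_injective_of_isUnit hG vecMul_eq]
  · intro φ
    obtain ⟨c, hc⟩ := Matrix.vecMul_surjective_iff_isUnit.2 hG (φ ∘ s)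
    refine ⟨∑ i, c i • u i, LinearMap.ext_on_range hs fun j => ?_⟩
    exact (apply_sum c j).trans (congrFun hc j)

theorem bijective_bracketPairing_span {L : Type} [LieRing L] [LieAlgebra ℂ L] (f : L →ₗ[ℂ] ℂ)
    (u s : ι → L) (hG : IsUnit (Matrix.of fun i j => f ⁅u i, s j⁆)) :
    Function.Bijective (bracketPairing L f (Submodule.span ℂ (Set.range u))
      (Submodule.span ℂ (Set.range s))) :=
  bijective_of_isUnit_gram _ (span_range_mk_eq_top u) (span_range_mk_eq_top s) hG

end GramMatrix

section Complexification

variable {g : Type}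

section Module

variable [AddCommGroup g] [Module ℝ g]

theorem holo_eq_antiholo_neg (x y : g) : holo g x y = antiholo g x (-y) := by
  rw [holo, antiholo, TensorProduct.tmul_neg, sub_eq_add_neg]

theorem antiholo_add_holo (x y : g) : antiholo g x y + holo g x y = 1 ⊗ₜ[ℝ] x := by
  rw [antiholo, holo, add_add_sub_cancel, ← TensorProduct.add_tmul, add_halves]

theorem antiholo_sub_holo (x y : g) : antiholo g x y - holo g x y = Complex.I ⊗ₜ[ℝ] y := by
  rw [antiholo, holo, add_sub_sub_cancel, ← TensorProduct.add_tmul, add_halves]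

end Module

variable [LieRing g] [LieAlgebra ℝ g]

theorem lie_antiholo_antiholo (x y u v : g) :
    ⁅antiholo g x y, antiholo g u v⁆ =
      (1 / 4 : ℂ) ⊗ₜ[ℝ] (⁅x, u⁆ - ⁅y, v⁆) + (Complex.I / 4) ⊗ₜ[ℝ] (⁅x, v⁆ + ⁅y, u⁆) := by
  have half_mul_half : (1 / 2 : ℂ) * (1 / 2) = 1 / 4 := by norm_num
  have half_mul_I : (1 / 2 : ℂ) * (Complex.I / 2) = Complex.I / 4 := by ring
  have I_mul_half : Complex.I / 2 * (1 / 2) = Complex.I / 4 := by ring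
  have I_mul_I : Complex.I / 2 * (Complex.I / 2) = -(1 / 4) := by
    linear_combination Complex.I_mul_I / 4
  simp only [antiholo, add_lie, lie_add, LieAlgebra.ExtendScalars.bracket_tmul, half_mul_half,
    half_mul_I, I_mul_half, I_mul_I, TensorProduct.tmul_sub, TensorProduct.tmul_add,
    TensorProduct.neg_tmul]
  abel

theorem lie_holo_holo (x y u v : g) :
    ⁅holo g x y, holo g u v⁆ =
      (1 / 4 : ℂ) ⊗ₜ[ℝ] (⁅x, u⁆ - ⁅y, v⁆) - (Complex.I / 4) ⊗ₜ[ℝ] (⁅x, v⁆ + ⁅y, u⁆) := by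
  rw [holo_eq_antiholo_neg, holo_eq_antiholo_neg, lie_antiholo_antiholo, neg_lie, lie_neg, lie_neg,
    neg_lie, neg_neg, ← neg_add, TensorProduct.tmul_neg, ← sub_eq_add_neg]

theorem lie_antiholo_holo (x y : g) :
    ⁅antiholo g x y, holo g x y⁆ = (-(Complex.I / 2)) ⊗ₜ[ℝ] ⁅x, y⁆ := by
  rw [holo_eq_antiholo_neg, lie_antiholo_antiholo, lie_neg, lie_neg, lie_self, lie_self,
    ← lie_skew x y, neg_neg, neg_zero, sub_zero, TensorProduct.tmul_zero, zero_add,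
    TensorProduct.tmul_add, ← TensorProduct.add_tmul, TensorProduct.tmul_neg,
    ← TensorProduct.neg_tmul]
  congr 1
  ring

end Complexification

/-- The bracket relations of `P_{4n+2}`, for blocks indexed by an arbitrary type `ι` and with
`X k i` standing for `X_{4k+i+1}`. Only the brackets are recorded, not that the vectors form a
basis of `g`. -/
structure IsPFrame {ι g : Type*} [LieRing g] [LieAlgebra ℝ g] (X : ι → Fin 4 → g) (Z₁ Z₂ : g) :
    Prop where
  lie_zero_one : ∀ k, ⁅X k 0, X k 1⁆ = -(1 / 2 : ℝ) • Z₁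
  lie_zero_three : ∀ k, ⁅X k 0, X k 3⁆ = -(1 / 2 : ℝ) • Z₂
  lie_one_two : ∀ k, ⁅X k 1, X k 2⁆ = -(1 / 2 : ℝ) • Z₂
  lie_zero_two : ∀ k, ⁅X k 0, X k 2⁆ = 0
  lie_one_three : ∀ k, ⁅X k 1, X k 3⁆ = 0
  lie_two_three : ∀ k, ⁅X k 2, X k 3⁆ = 0
  lie_of_ne : ∀ k l, k ≠ l → ∀ i j, ⁅X k i, X l j⁆ = 0
  lie_Z₁ : ∀ k i, ⁅X k i, Z₁⁆ = 0
  lie_Z₂ : ∀ k i, ⁅X k i, Z₂⁆ = 0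
  lie_Z₁_Z₂ : ⁅Z₁, Z₂⁆ = 0

/-- `J` acts on the frame of `P_{4n+2}` by `J X₁ = X₂`, `J X₃ = -X₄` in each block and
`J Z₁ = -Z₂`, with `J² = -1` on the frame. -/
structure IsAdapted {ι g : Type*} [AddCommGroup g] [Module ℝ g] (J : g →ₗ[ℝ] g)
    (X : ι → Fin 4 → g) (Z₁ Z₂ : g) : Prop where
  map_X_zero : ∀ k, J (X k 0) = X k 1
  map_X_one : ∀ k, J (X k 1) = -X k 0
  map_X_two : ∀ k, J (X k 2) = -X k 3
  map_X_three : ∀ k, J (X k 3) = X k 2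
  map_Z₁ : J Z₁ = -Z₂
  map_Z₂ : J Z₂ = Z₁

/-- One vector from each `J`-plane `⟨X₁, X₂⟩`, `⟨X₃, X₄⟩`, `⟨Z₁, Z₂⟩` of the frame. -/
def planeRepresentatives {ι g : Type*} (X : ι → Fin 4 → g) (Z₁ : g) : Set g :=
  (Set.range fun k => X k 0) ∪ (Set.range fun k => X k 2) ∪ {Z₁}

namespace IsAdapted

variable {ι g : Type*} {X : ι → Fin 4 → g} {Z₁ Z₂ : g}

section Module

variable [AddCommGroup g] [Module ℝ g] {J : g →ₗ[ℝ] g}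

theorem span_planeRepresentatives (hJ : IsAdapted J X Z₁ Z₂)
    (hspan : Submodule.span ℝ (Set.range (fun p : ι × Fin 4 => X p.1 p.2) ∪ {Z₁, Z₂}) = ⊤) :
    Submodule.span ℝ (planeRepresentatives X Z₁ ∪ J '' planeRepresentatives X Z₁) = ⊤ := by
  set S := planeRepresentatives X Z₁
  have mem {x : g} (hx : x ∈ S) : x ∈ Submodule.span ℝ (S ∪ J '' S) :=
    Submodule.subset_span (Or.inl hx)
  have map_mem {x : g} (hx : x ∈ S) : J x ∈ Submodule.span ℝ (S ∪ J '' S) :=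
    Submodule.subset_span (Or.inr ⟨x, hx, rfl⟩)
  have mem_zero (k : ι) : X k 0 ∈ S := Or.inl (Or.inl ⟨k, rfl⟩)
  have mem_two (k : ι) : X k 2 ∈ S := Or.inl (Or.inr ⟨k, rfl⟩)
  have mem_Z₁ : Z₁ ∈ S := Or.inr rfl
  refine top_unique (hspan ▸ Submodule.span_le.2 ?_)
  rintro _ (⟨⟨k, i⟩, rfl⟩ | rfl | rfl)
  · fin_cases i
    · exact mem (mem_zero k)
    · have := map_mem (mem_zero k)
      rwa [hJ.map_X_zero] at this
    · exact mem (mem_two k)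
    · exact Submodule.neg_mem_iff _ |>.1 (hJ.map_X_two k ▸ map_mem (mem_two k))
  · exact mem mem_Z₁
  · exact Submodule.neg_mem_iff _ |>.1 (hJ.map_Z₁ ▸ map_mem mem_Z₁)

theorem map_map_of_mem (hJ : IsAdapted J X Z₁ Z₂) :
    ∀ x ∈ planeRepresentatives X Z₁, J (J x) = -x := by
  rintro _ ((⟨k, rfl⟩ | ⟨k, rfl⟩) | rfl)
  · rw [hJ.map_X_zero, hJ.map_X_one]
  · rw [hJ.map_X_two, map_neg, hJ.map_X_three]
  · rw [hJ.map_Z₁, map_neg, hJ.map_Z₂]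

end Module

variable [LieRing g] [LieAlgebra ℝ g] {J : g →ₗ[ℝ] g}

theorem isAbelianPair_zero_two (hJ : IsAdapted J X Z₁ Z₂) (hX : IsPFrame X Z₁ Z₂) (k l : ι) :
    IsAbelianPair J (X k 0) (X l 2) := by
  rw [IsAbelianPair, hJ.map_X_zero, hJ.map_X_two, lie_neg, lie_neg, neg_neg]
  obtain rfl | hkl := eq_or_ne k l
  · rw [hX.lie_one_three, hX.lie_zero_two, hX.lie_one_two, hX.lie_zero_three]
    exact ⟨neg_zero, rfl⟩
  · simp only [hX.lie_of_ne k l hkl, neg_zero, and_self]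

theorem isAbelianPair_zero_zero (hJ : IsAdapted J X Z₁ Z₂) (hX : IsPFrame X Z₁ Z₂) (k l : ι) :
    IsAbelianPair J (X k 0) (X l 0) := by
  obtain rfl | hkl := eq_or_ne k l
  · exact .refl _ _
  · simp only [IsAbelianPair, hJ.map_X_zero, hX.lie_of_ne k l hkl, neg_zero, and_self]

theorem isAbelianPair_two_two (hJ : IsAdapted J X Z₁ Z₂) (hX : IsPFrame X Z₁ Z₂) (k l : ι) :
    IsAbelianPair J (X k 2) (X l 2) := by
  obtain rfl | hkl := eq_or_ne k l
  · exact .refl _ _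
  · simp only [IsAbelianPair, hJ.map_X_two, neg_lie, lie_neg, hX.lie_of_ne k l hkl, neg_zero,
      and_self]

theorem isAbelianPair_zero_Z₁ (hJ : IsAdapted J X Z₁ Z₂) (hX : IsPFrame X Z₁ Z₂) (k : ι) :
    IsAbelianPair J (X k 0) Z₁ := by
  simp only [IsAbelianPair, hJ.map_X_zero, hJ.map_Z₁, lie_neg, hX.lie_Z₁, hX.lie_Z₂,
    neg_zero, and_self]

theorem isAbelianPair_two_Z₁ (hJ : IsAdapted J X Z₁ Z₂) (hX : IsPFrame X Z₁ Z₂) (k : ι) :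
    IsAbelianPair J (X k 2) Z₁ := by
  simp only [IsAbelianPair, hJ.map_X_two, hJ.map_Z₁, neg_lie, lie_neg, hX.lie_Z₁, hX.lie_Z₂,
    neg_zero, and_self]

theorem isAbelianPair_of_mem (hJ : IsAdapted J X Z₁ Z₂) (hX : IsPFrame X Z₁ Z₂) :
    ∀ x ∈ planeRepresentatives X Z₁, ∀ y ∈ planeRepresentatives X Z₁, IsAbelianPair J x y := by
  rintro _ ((⟨k, rfl⟩ | ⟨k, rfl⟩) | rfl) _ ((⟨l, rfl⟩ | ⟨l, rfl⟩) | rfl)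
  · exact hJ.isAbelianPair_zero_zero hX k l
  · exact hJ.isAbelianPair_zero_two hX k l
  · exact hJ.isAbelianPair_zero_Z₁ hX k
  · exact (hJ.isAbelianPair_zero_two hX l k).symm
  · exact hJ.isAbelianPair_two_two hX k l
  · exact hJ.isAbelianPair_two_Z₁ hX k
  · exact (hJ.isAbelianPair_zero_Z₁ hX l).symm
  · exact (hJ.isAbelianPair_two_Z₁ hX l).symm
  · exact .refl _ _

end IsAdapted

/-- The frame of `t^{1,0}`: the vectors `T_{2k+1}`, then the vectors `T_{2k+2}`. -/
def frame10 {ι : Type*} {g : Type} [AddCommGroup g] [Module ℝ g] (X : ι → Fin 4 → g) :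
    ι ⊕ ι → ℂ ⊗[ℝ] g :=
  Sum.elim (fun k => holo g (X k 0) (X k 1)) (fun k => antiholo g (X k 2) (X k 3))

/-- The frame of `t^{0,1}`, with the vectors `T̄_{2k+2}` listed before the vectors `T̄_{2k+1}`: this
order makes the Gram matrix against `frame10` block triangular. -/
def frame01 {ι : Type*} {g : Type} [AddCommGroup g] [Module ℝ g] (X : ι → Fin 4 → g) :
    ι ⊕ ι → ℂ ⊗[ℝ] g :=
  Sum.elim (fun k => holo g (X k 2) (X k 3)) (fun k => antiholo g (X k 0) (X k 1))

namespace IsPFrame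

variable {ι : Type*} {g : Type} [LieRing g] [LieAlgebra ℝ g] {X : ι → Fin 4 → g} {Z₁ Z₂ : g}

theorem lie_conj_T₁_T₁ (hX : IsPFrame X Z₁ Z₂) (k : ι) :
    ⁅antiholo g (X k 0) (X k 1), holo g (X k 0) (X k 1)⁆ =
      (Complex.I / 4) • (antiholo g Z₁ Z₂ + holo g Z₁ Z₂) := by
  rw [lie_antiholo_holo, hX.lie_zero_one, antiholo_add_holo, ← TensorProduct.smul_tmul,
    TensorProduct.smul_tmul']
  congr 1
  rw [Complex.real_smul, smul_eq_mul]
  push_cast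
  ring

theorem lie_zero_three_add_lie_one_two (hX : IsPFrame X Z₁ Z₂) (k : ι) :
    ⁅X k 0, X k 3⁆ + ⁅X k 1, X k 2⁆ = -Z₂ := by
  rw [hX.lie_zero_three, hX.lie_one_two]
  module

theorem lie_conj_T₁_T₂ (hX : IsPFrame X Z₁ Z₂) (k : ι) :
    ⁅antiholo g (X k 0) (X k 1), antiholo g (X k 2) (X k 3)⁆ =
      (-(1 : ℂ) / 4) • (antiholo g Z₁ Z₂ - holo g Z₁ Z₂) := by
  rw [lie_antiholo_antiholo, hX.lie_zero_two, hX.lie_one_three, hX.lie_zero_three_add_lie_one_two,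
    sub_zero, TensorProduct.tmul_zero, zero_add, antiholo_sub_holo, TensorProduct.tmul_neg,
    ← TensorProduct.neg_tmul, TensorProduct.smul_tmul', smul_eq_mul]
  congr 1
  ring

theorem lie_T₁_conj_T₂ (hX : IsPFrame X Z₁ Z₂) (k : ι) :
    ⁅holo g (X k 0) (X k 1), holo g (X k 2) (X k 3)⁆ =
      (1 / 4 : ℂ) • (antiholo g Z₁ Z₂ - holo g Z₁ Z₂) := by
  rw [lie_holo_holo, hX.lie_zero_two, hX.lie_one_three, hX.lie_zero_three_add_lie_one_two,
    sub_zero, TensorProduct.tmul_zero, zero_sub, antiholo_sub_holo, TensorProduct.tmul_neg, neg_neg,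
    TensorProduct.smul_tmul', smul_eq_mul]
  congr 1
  ring

theorem lie_T₂_conj_T₂ (hX : IsPFrame X Z₁ Z₂) (k : ι) :
    ⁅antiholo g (X k 2) (X k 3), holo g (X k 2) (X k 3)⁆ = 0 := by
  rw [lie_antiholo_holo, hX.lie_two_three, TensorProduct.tmul_zero]

theorem gram_eq_fromBlocks [DecidableEq ι] (hX : IsPFrame X Z₁ Z₂) (ρ : ℂ ⊗[ℝ] g →ₗ[ℂ] ℂ) :
    (Matrix.of fun i j => ρ ⁅frame10 X i, frame01 X j⁆) =
      Matrix.fromBlocks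
        (((ρ (antiholo g Z₁ Z₂) - ρ (holo g Z₁ Z₂)) / 4) • 1)
        ((-(Complex.I / 4) * (ρ (antiholo g Z₁ Z₂) + ρ (holo g Z₁ Z₂))) • 1)
        0
        (((ρ (antiholo g Z₁ Z₂) - ρ (holo g Z₁ Z₂)) / 4) • 1) := by
  have block_T₁_conj_T₂ (k : ι) : ρ ⁅holo g (X k 0) (X k 1), holo g (X k 2) (X k 3)⁆ =
      (ρ (antiholo g Z₁ Z₂) - ρ (holo g Z₁ Z₂)) / 4 := by
    rw [hX.lie_T₁_conj_T₂, map_smul, map_sub, smul_eq_mul]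
    ring
  have block_T₁_conj_T₁ (k : ι) : ρ ⁅holo g (X k 0) (X k 1), antiholo g (X k 0) (X k 1)⁆ =
      -(Complex.I / 4) * (ρ (antiholo g Z₁ Z₂) + ρ (holo g Z₁ Z₂)) := by
    rw [← lie_skew, hX.lie_conj_T₁_T₁, map_neg, map_smul, map_add, smul_eq_mul, neg_mul]
  have block_T₂_conj_T₁ (k : ι) : ρ ⁅antiholo g (X k 2) (X k 3), antiholo g (X k 0) (X k 1)⁆ =
      (ρ (antiholo g Z₁ Z₂) - ρ (holo g Z₁ Z₂)) / 4 := by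
    rw [← lie_skew, hX.lie_conj_T₁_T₂, map_neg, map_smul, map_sub, smul_eq_mul]
    ring
  ext (k | k) (l | l) <;> obtain rfl | hkl := eq_or_ne k l
  · simp [frame10, frame01, block_T₁_conj_T₂]
  · simp [frame10, frame01, holo, hX.lie_of_ne k l hkl, hkl]
  · simp [frame10, frame01, block_T₁_conj_T₁]
  · simp [frame10, frame01, holo, antiholo, hX.lie_of_ne k l hkl, hkl]
  · simp [frame10, frame01, hX.lie_T₂_conj_T₂]
  · simp [frame10, frame01, holo, antiholo, hX.lie_of_ne k l hkl]
  · simp [frame10, frame01, block_T₂_conj_T₁]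
  · simp [frame10, frame01, antiholo, hX.lie_of_ne k l hkl, hkl]

theorem isUnit_gram [Fintype ι] [DecidableEq ι] (hX : IsPFrame X Z₁ Z₂) {ρ : ℂ ⊗[ℝ] g →ₗ[ℂ] ℂ}
    (hρ : ρ (antiholo g Z₁ Z₂) ≠ ρ (holo g Z₁ Z₂)) :
    IsUnit (Matrix.of fun i j => ρ ⁅frame10 X i, frame01 X j⁆) := by
  have scalar_ne_zero : (ρ (antiholo g Z₁ Z₂) - ρ (holo g Z₁ Z₂)) / 4 ≠ 0 :=
    div_ne_zero (sub_ne_zero.2 hρ) (by norm_num)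
  have isUnit_diagonal :
      IsUnit (((ρ (antiholo g Z₁ Z₂) - ρ (holo g Z₁ Z₂)) / 4) • (1 : Matrix ι ι ℂ)) :=
    isUnit_one.smul (Units.mk0 _ scalar_ne_zero)
  rw [hX.gram_eq_fromBlocks, Matrix.isUnit_fromBlocks_zero₂₁]
  exact ⟨isUnit_diagonal, isUnit_diagonal⟩

theorem bijective_bracketPairing [Finite ι] (hX : IsPFrame X Z₁ Z₂) {ρ : ℂ ⊗[ℝ] g →ₗ[ℂ] ℂ}
    (hρ : ρ (antiholo g Z₁ Z₂) ≠ ρ (holo g Z₁ Z₂)) :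
    Function.Bijective (bracketPairing (ℂ ⊗[ℝ] g) ρ
      (Submodule.span ℂ
        ((Set.range fun k => holo g (X k 0) (X k 1)) ∪
          (Set.range fun k => antiholo g (X k 2) (X k 3))))
      (Submodule.span ℂ
        ((Set.range fun k => antiholo g (X k 0) (X k 1)) ∪
          (Set.range fun k => holo g (X k 2) (X k 3))))) := by
  classical
  have := Fintype.ofFinite ι
  rw [Set.union_comm (Set.range fun k => antiholo g (X k 0) (X k 1)), ← Set.Sum.elim_range,
    ← Set.Sum.elim_range]
  exact bijective_bracketPairing_span ρ (frame10 X) (frame01 X) (hX.isUnit_gram hρ)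

end IsPFrame

theorem span_frame_eq_top_of_basis {ι R M : Type*} [Semiring R] [AddCommMonoid M] [Module R M]
    {X : ι → Fin 4 → M} {Z₁ Z₂ : M} (b : Module.Basis ((ι × Fin 4) ⊕ Fin 2) R M)
    (hX : ∀ k i, b (Sum.inl (k, i)) = X k i) (hZ₁ : b (Sum.inr 0) = Z₁)
    (hZ₂ : b (Sum.inr 1) = Z₂) :
    Submodule.span R (Set.range (fun p : ι × Fin 4 => X p.1 p.2) ∪ {Z₁, Z₂}) = ⊤ := by
  refine top_unique (b.span_eq ▸ Submodule.span_mono ?_)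
  rintro _ ⟨⟨k, i⟩ | i, rfl⟩
  · exact Or.inl ⟨(k, i), (hX k i).symm⟩
  · fin_cases i
    · exact Or.inr (Or.inl hZ₁)
    · exact Or.inr (Or.inr hZ₂)

theorem statement14_general {ι : Type*} [Finite ι] {g : Type} [LieRing g] [LieAlgebra ℝ g]
    {X : ι → Fin 4 → g} {Z₁ Z₂ : g} (hX : IsPFrame X Z₁ Z₂)
    (hspan : Submodule.span ℝ (Set.range (fun p : ι × Fin 4 => X p.1 p.2) ∪ {Z₁, Z₂}) = ⊤)
    {J : g →ₗ[ℝ] g} (hJ : IsAdapted J X Z₁ Z₂) {ρ : ℂ ⊗[ℝ] g →ₗ[ℂ] ℂ}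
    (hρ : ρ (antiholo g Z₁ Z₂) ≠ ρ (holo g Z₁ Z₂)) :
    ((∀ v : g, J (J v) = -v) ∧ (∀ a c : g, ⁅J a, J c⁆ = ⁅a, c⁆)) ∧
    ((∀ k, ⁅antiholo g (X k 0) (X k 1), holo g (X k 0) (X k 1)⁆
        = (Complex.I / 4) • (antiholo g Z₁ Z₂ + holo g Z₁ Z₂)) ∧
     (∀ k, ⁅antiholo g (X k 0) (X k 1), antiholo g (X k 2) (X k 3)⁆
        = (-(1 : ℂ) / 4) • (antiholo g Z₁ Z₂ - holo g Z₁ Z₂))) ∧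
    Function.Bijective (bracketPairing (ℂ ⊗[ℝ] g) ρ
      (Submodule.span ℂ
        ((Set.range fun k => holo g (X k 0) (X k 1)) ∪
          (Set.range fun k => antiholo g (X k 2) (X k 3))))
      (Submodule.span ℂ
        ((Set.range fun k => antiholo g (X k 0) (X k 1)) ∪
          (Set.range fun k => holo g (X k 2) (X k 3))))) :=
  have hplanes := hJ.span_planeRepresentatives hspan
  ⟨⟨map_map_eq_neg_of_span_eq_top hplanes hJ.map_map_of_mem,
    lie_map_map_of_span_eq_top hplanes hJ.map_map_of_mem (hJ.isAbelianPair_of_mem hX)⟩,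
    ⟨hX.lie_conj_T₁_T₁, hX.lie_conj_T₁_T₂⟩, hX.bijective_bracketPairing hρ⟩

/-- The 2-step nilpotent Lie algebra `P_{4n+2}` (with `n` blocks
`X_{4k+1}, …, X_{4k+4}` and center `Z_1, Z_2`, here `X k i := X_{4k+i+1}`): (i) `J` is an
abelian complex structure; (ii) with `V = (Z_1 + iZ_2)/2`, `T_{2k+1} = (X_{4k+1} - iX_{4k+2})/2`,
`T_{2k+2} = (X_{4k+3} + iX_{4k+4})/2`, the non-zero complex structure equations are
`[T̄_{2k+1}, T_{2k+1}] = (i/4)(V + V̄)` and `[T̄_{2k+1}, T_{2k+2}] = -(1/4)(V - V̄)`;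
(iii) the map `t^{1,0} → (t^{0,1})^*`, `X ↦ (Ȳ ↦ ρ([X, Ȳ]))`, is bijective. -/
theorem statement14 (n : ℕ) (g : Type) [LieRing g] [LieAlgebra ℝ g]
    (X : Fin n → Fin 4 → g) (Z1 Z2 : g)
    (b : Module.Basis ((Fin n × Fin 4) ⊕ Fin 2) ℝ g)
    (hbX : ∀ k i, b (Sum.inl (k, i)) = X k i)
    (hbZ1 : b (Sum.inr 0) = Z1) (hbZ2 : b (Sum.inr 1) = Z2)
    (h12 : ∀ k, ⁅X k 0, X k 1⁆ = -(1/2 : ℝ) • Z1)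
    (h14 : ∀ k, ⁅X k 0, X k 3⁆ = -(1/2 : ℝ) • Z2)
    (h23 : ∀ k, ⁅X k 1, X k 2⁆ = -(1/2 : ℝ) • Z2)
    (h13 : ∀ k, ⁅X k 0, X k 2⁆ = 0)
    (h24 : ∀ k, ⁅X k 1, X k 3⁆ = 0)
    (h34 : ∀ k, ⁅X k 2, X k 3⁆ = 0)
    (hcross : ∀ k l, k ≠ l → ∀ i i', ⁅X k i, X l i'⁆ = 0)
    (hZ1c : ∀ k i, ⁅X k i, Z1⁆ = 0) (hZ2c : ∀ k i, ⁅X k i, Z2⁆ = 0)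
    (hZZ : ⁅Z1, Z2⁆ = 0)
    (J : g →ₗ[ℝ] g)
    (hJ1 : ∀ k, J (X k 0) = X k 1) (hJ2' : ∀ k, J (X k 1) = -X k 0)
    (hJ3 : ∀ k, J (X k 2) = -X k 3) (hJ4 : ∀ k, J (X k 3) = X k 2)
    (hJZ1 : J Z1 = -Z2) (hJZ2 : J Z2 = Z1)
    (ρ : (ℂ ⊗[ℝ] g) →ₗ[ℂ] ℂ)
    (hρV : ρ (antiholo g Z1 Z2) = 1) (hρVb : ρ (holo g Z1 Z2) = 0)
    (hρ1 : ∀ k, ρ (holo g (X k 0) (X k 1)) = 0)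
    (hρ1b : ∀ k, ρ (antiholo g (X k 0) (X k 1)) = 0)
    (hρ2 : ∀ k, ρ (antiholo g (X k 2) (X k 3)) = 0)
    (hρ2b : ∀ k, ρ (holo g (X k 2) (X k 3)) = 0) :
    ((∀ v : g, J (J v) = -v) ∧ (∀ a c : g, ⁅J a, J c⁆ = ⁅a, c⁆)) ∧
    ((∀ k, ⁅antiholo g (X k 0) (X k 1), holo g (X k 0) (X k 1)⁆
        = (Complex.I/4) • (antiholo g Z1 Z2 + holo g Z1 Z2)) ∧
     (∀ k, ⁅antiholo g (X k 0) (X k 1), antiholo g (X k 2) (X k 3)⁆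
        = (-(1 : ℂ)/4) • (antiholo g Z1 Z2 - holo g Z1 Z2))) ∧
    Function.Bijective (bracketPairing (ℂ ⊗[ℝ] g) ρ
      (Submodule.span ℂ
        ((Set.range fun k => holo g (X k 0) (X k 1)) ∪
          (Set.range fun k => antiholo g (X k 2) (X k 3))))
      (Submodule.span ℂ
        ((Set.range fun k => antiholo g (X k 0) (X k 1)) ∪
          (Set.range fun k => holo g (X k 2) (X k 3))))) := by
  exact statement14_general ⟨h12, h14, h23, h13, h24, h34, hcross, hZ1c, hZ2c, hZZ⟩
    (span_frame_eq_top_of_basis b hbX hbZ1 hbZ2) ⟨hJ1, hJ2', hJ3, hJ4, hJZ1, hJZ2⟩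
    (by rw [hρV, hρVb]; exact one_ne_zero)
end
end
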